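/- Let a, b, c, d be positive integers with bc − ad = 1 and a > b, and set A = [[a, −b], [c, −d]] ∈ SL(2,ℤ). Suppose c_1, …, c_k are positive integers with c_i ≥ 2 for all 2 ≤ i ≤ k, such that K_k(c_1, …, c_k) = a and K_{k−1}(c_2, …, c_k) = c (equivalently, a/c = ⟦c_1, …, c_k⟧). Then A = M(c_1, …, c_k), and k is the smallest length of any presentation ±A = M(d_1, …, d_m) with positive integers d_1, …, d_m. -/

import Mathlib

/-- `M(c₁, …, c_n) = [[c₁,−1],[1,0]] ⋯ [[c_n,−1],[1,0]]`. -/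
def Mneg (cs : List ℤ) : Matrix (Fin 2) (Fin 2) ℤ :=
  (cs.map fun c => !![c, -1; 1, 0]).prod

/-- The continuant `K_k(c₁, …, c_k)`, with `K₀ = 1` (empty list) and the
(left-peeling) recursion `K(c₁, c₂, …) = c₁·K(c₂, …) − K(c₃, …)`. -/
def Klist : List ℤ → ℤ
  | [] => 1
  | [x] => x
  | x :: y :: l => x * Klist (y :: l) - Klist l

/-!
Read a column `(p, r)` as the fraction `p / r`, so that the first column of `M(c₁, …, c_k)` is
`⟦c₁, …, c_k⟧`. Two matrices in `SL(2, ℤ)` with the same first column `(a, c)` have upper right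
entries congruent modulo `a`. For `A` and `M(c₁, …, c_k)` these entries lie in `(-a, 0)` and
`[-a, 0]`, so they are equal.

For minimality it is enough to compare fractions: if `⟦d₁, …, d_m⟧ = ⟦x, u⟧` with all `d_i ≥ 1` and
all entries of `u` at least `2`, then `m ≥ 1 + |u|`. Strip `d = d₁`. If `d = x`, the tails agree.
If `d > x`, then `⟦d₂, …⟧ = 1 / (n + 1 / ⟦u⟧)` with `n = d - x`. If `d < x`, then
`⟦d₃, …⟧ = 1 / (d₂ + 1 / ⟦x - d, u⟧)`. In both cases
`1 / (n + 1 / ⟦y, u'⟧) = ⟦1, 2, …, 2, y + 1, u'⟧` (with `n - 1` twos) is again of the form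
`⟦1, w⟧`, where `w` has entries at least `2` and is longer than `u'`, so induction on `m` applies.
-/

theorem eq_of_det_eq_one_of_col_zero_eq {A B : Matrix (Fin 2) (Fin 2) ℤ}
    (hA : A.det = 1) (hB : B.det = 1) (hcol : A.col 0 = B.col 0)
    (hlt : |A 0 1 - B 0 1| < A 0 0) : A = B := by
  have h₀ : A 0 0 = B 0 0 := congrFun hcol 0
  have h₁ : A 1 0 = B 1 0 := congrFun hcol 1
  rw [Matrix.det_fin_two] at hA hB
  rw [← h₀, ← h₁] at hB
  have hpos : 0 < A 0 0 := (abs_nonneg _).trans_lt hlt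
  have hcop : IsCoprime (A 0 0) (A 1 0) := ⟨A 1 1, -A 0 1, by linear_combination hA⟩
  have hmul : (A 0 1 - B 0 1) * A 1 0 = A 0 0 * (A 1 1 - B 1 1) := by
    linear_combination hB - hA
  have h₂ : A 0 1 - B 0 1 = 0 :=
    Int.eq_zero_of_abs_lt_dvd (hcop.dvd_of_dvd_mul_right ⟨_, hmul⟩) hlt
  have h₃ : A 1 1 - B 1 1 = 0 := by
    rw [h₂, zero_mul, eq_comm] at hmul
    exact (mul_eq_zero.mp hmul).resolve_left hpos.ne'
  ext i j
  fin_cases i <;> fin_cases j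
  exacts [h₀, sub_eq_zero.mp h₂, h₁, sub_eq_zero.mp h₃]

theorem Mneg_nil : Mneg [] = 1 := rfl

theorem Mneg_cons (x : ℤ) (l : List ℤ) : Mneg (x :: l) = !![x, -1; 1, 0] * Mneg l := rfl

theorem Mneg_cons_apply_zero (x : ℤ) (l : List ℤ) (j : Fin 2) :
    Mneg (x :: l) 0 j = x * Mneg l 0 j - Mneg l 1 j := by
  simp [Mneg_cons, Matrix.mul_apply, sub_eq_add_neg]

theorem Mneg_cons_apply_one (x : ℤ) (l : List ℤ) (j : Fin 2) :
    Mneg (x :: l) 1 j = Mneg l 0 j := by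
  simp [Mneg_cons, Matrix.mul_apply]

theorem Mneg_cons_mulVec (x : ℤ) (l : List ℤ) (v : Fin 2 → ℤ) :
    (Mneg (x :: l)).mulVec v =
      ![x * (Mneg l).mulVec v 0 - (Mneg l).mulVec v 1, (Mneg l).mulVec v 0] := by
  rw [Mneg_cons, ← Matrix.mulVec_mulVec]
  ext i
  fin_cases i <;> simp [sub_eq_add_neg, mul_comm x]

theorem det_Mneg (l : List ℤ) : (Mneg l).det = 1 := by
  induction l with
  | nil => simp [Mneg_nil]
  | cons x l ih => rw [Mneg_cons, Matrix.det_mul, ih]; simp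

theorem Mneg_apply_zero_zero (l : List ℤ) : Mneg l 0 0 = Klist l := by
  fun_induction Klist l with
  | case1 => simp [Mneg_nil]
  | case2 x => simp [Mneg_cons_apply_zero, Mneg_nil]
  | case3 x y l ih₁ ih₂ => rw [Mneg_cons_apply_zero, Mneg_cons_apply_one, ih₁, ih₂]

theorem col_zero_Mneg_cons (x : ℤ) (l : List ℤ) :
    (Mneg (x :: l)).col 0 = ![Klist (x :: l), Klist l] := by
  ext i
  fin_cases i
  exacts [Mneg_apply_zero_zero _, (Mneg_cons_apply_one x l 0).trans (Mneg_apply_zero_zero l)]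

theorem le_Mneg_mulVec_and_sub_le_sub {u : List ℤ} (hu : ∀ z ∈ u, 2 ≤ z) {v : Fin 2 → ℤ}
    (hv₀ : 0 ≤ v 0) (hv₁ : v 1 ≤ v 0) :
    v 0 ≤ (Mneg u).mulVec v 0 ∧ v 0 - v 1 ≤ (Mneg u).mulVec v 0 - (Mneg u).mulVec v 1 := by
  induction u with
  | nil => simp [Mneg_nil]
  | cons x u ih =>
    obtain ⟨hx, hu⟩ := List.forall_mem_cons.mp hu
    obtain ⟨h₀, h₁⟩ := ih hu
    simp only [Mneg_cons_mulVec, Matrix.cons_val_zero, Matrix.cons_val_one]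
    constructor <;> nlinarith

theorem Mneg_apply_zero_zero_pos {u : List ℤ} (hu : ∀ z ∈ u, 2 ≤ z) : 0 < Mneg u 0 0 := by
  have h : 1 ≤ Mneg u 0 0 := by
    simpa using (le_Mneg_mulVec_and_sub_le_sub hu (v := ![1, 0]) (by simp) (by simp)).1
  omega

theorem Mneg_apply_one_zero_lt_apply_zero_zero {u : List ℤ} (hu : ∀ z ∈ u, 2 ≤ z) :
    Mneg u 1 0 < Mneg u 0 0 := by
  have h : 1 ≤ Mneg u 0 0 - Mneg u 1 0 := by
    simpa using (le_Mneg_mulVec_and_sub_le_sub hu (v := ![1, 0]) (by simp) (by simp)).2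
  omega

theorem neg_Mneg_cons_apply_zero_one_mem_Icc {x : ℤ} {u : List ℤ} (hx : 1 ≤ x)
    (hu : ∀ z ∈ u, 2 ≤ z) : -Mneg (x :: u) 0 1 ∈ Set.Icc 0 (Mneg (x :: u) 0 0) := by
  have hneg : Mneg u 0 1 ≤ 0 ∧ 1 ≤ -Mneg u 0 1 + Mneg u 1 1 := by
    simpa using le_Mneg_mulVec_and_sub_le_sub hu (v := ![0, -1]) (by simp) (by simp)
  have hsum : 1 ≤ Mneg u 0 0 + Mneg u 0 1 ∧
      Mneg u 1 0 + Mneg u 1 1 ≤ Mneg u 0 0 + Mneg u 0 1 := by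
    simpa using le_Mneg_mulVec_and_sub_le_sub hu (v := ![1, 1]) (by simp) (by simp)
  rw [Mneg_cons_apply_zero, Mneg_cons_apply_zero]
  constructor <;> nlinarith

-- On fractions, `(p, r) ↦ (p, n p + r)` is `α ↦ 1 / (n + 1 / α)`.
theorem exists_Mneg_one_cons_eq {n y : ℤ} {u : List ℤ} (hn : 1 ≤ n) (hy : 1 ≤ y)
    (hu : ∀ z ∈ u, 2 ≤ z) :
    ∃ w : List ℤ, (∀ z ∈ w, 2 ≤ z) ∧ u.length < w.length ∧
      Mneg (1 :: w) = !![1, 0; n, 1] * Mneg (y :: u) := by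
  induction n, hn using Int.leInduction with
  | base =>
    refine ⟨(y + 1) :: u, List.forall_mem_cons.mpr ⟨by omega, hu⟩, by simp, ?_⟩
    simp only [Mneg_cons, ← mul_assoc]
    congr 1
    simp [add_comm]
  | succ n _ ih =>
    obtain ⟨w, hw, hlen, hM⟩ := ih
    refine ⟨2 :: w, List.forall_mem_cons.mpr ⟨le_rfl, hw⟩, hlen.trans (by simp), ?_⟩
    have hshear : (!![1, 0; n + 1, 1] : Matrix (Fin 2) (Fin 2) ℤ) =
        !![1, 0; 1, 1] * !![1, 0; n, 1] := by simp [add_comm]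
    rw [hshear, mul_assoc, ← hM]
    simp only [Mneg_cons, ← mul_assoc]
    congr 1
    simp

theorem exists_Mneg_cons_one_cons_eq {d x y : ℤ} {u : List ℤ} (hxd : x < d) (hy : 1 ≤ y)
    (hu : ∀ z ∈ u, 2 ≤ z) :
    ∃ w : List ℤ, (∀ z ∈ w, 2 ≤ z) ∧ u.length < w.length ∧
      Mneg (d :: 1 :: w) = Mneg (x :: y :: u) := by
  obtain ⟨w, hw, hlen, hM⟩ := exists_Mneg_one_cons_eq (show 1 ≤ d - x by omega) hy hu
  refine ⟨w, hw, hlen, ?_⟩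
  rw [Mneg_cons, hM, Mneg_cons x, ← mul_assoc]
  congr 1
  simp

theorem exists_Mneg_cons_cons_one_cons_eq_neg {d e x : ℤ} {u : List ℤ} (hdx : d < x)
    (he : 1 ≤ e) (hu : ∀ z ∈ u, 2 ≤ z) :
    ∃ w : List ℤ, (∀ z ∈ w, 2 ≤ z) ∧ u.length < w.length ∧
      Mneg (d :: e :: 1 :: w) = -Mneg (x :: u) := by
  obtain ⟨w, hw, hlen, hM⟩ := exists_Mneg_one_cons_eq he (show 1 ≤ x - d by omega) hu
  refine ⟨w, hw, hlen, ?_⟩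
  rw [Mneg_cons, Mneg_cons, hM, Mneg_cons x, Mneg_cons, ← neg_mul]
  simp only [← mul_assoc]
  congr 1
  simp [sub_eq_add_neg]

theorem col_zero_eq_smul_of_cons {d δ : ℤ} {l l' : List ℤ}
    (h : (Mneg (d :: l)).col 0 = δ • (Mneg (d :: l')).col 0) :
    (Mneg l).col 0 = δ • (Mneg l').col 0 := by
  have h₀ : Mneg (d :: l) 0 0 = δ * Mneg (d :: l') 0 0 := congrFun h 0
  have h₁ : Mneg (d :: l) 1 0 = δ * Mneg (d :: l') 1 0 := congrFun h 1
  rw [Mneg_cons_apply_zero, Mneg_cons_apply_zero] at h₀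
  rw [Mneg_cons_apply_one, Mneg_cons_apply_one] at h₁
  ext i
  fin_cases i
  exacts [h₁, show Mneg l 1 0 = δ * Mneg l' 1 0 by linear_combination d * h₁ - h₀]

theorem col_zero_nil_ne_smul {x δ : ℤ} {u : List ℤ} (hu : ∀ z ∈ u, 2 ≤ z) (hδ : δ ≠ 0) :
    (Mneg []).col 0 ≠ δ • (Mneg (x :: u)).col 0 := by
  intro h
  have h₁ : Mneg [] 1 0 = δ * Mneg (x :: u) 1 0 := congrFun h 1
  simp [Mneg_nil, Mneg_cons_apply_one, hδ, (Mneg_apply_zero_zero_pos hu).ne'] at h₁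

theorem col_zero_singleton_ne_smul {d x δ : ℤ} {u : List ℤ} (hdx : d < x)
    (hu : ∀ z ∈ u, 2 ≤ z) (hδ : δ ≠ 0) :
    (Mneg [d]).col 0 ≠ δ • (Mneg (x :: u)).col 0 := by
  intro h
  have hpos := Mneg_apply_zero_zero_pos hu
  have hlt := Mneg_apply_one_zero_lt_apply_zero_zero hu
  have h₀ : Mneg [d] 0 0 = δ * Mneg (x :: u) 0 0 := congrFun h 0
  have h₁ : Mneg [d] 1 0 = δ * Mneg (x :: u) 1 0 := congrFun h 1
  rw [Mneg_cons_apply_zero, Mneg_cons_apply_zero] at h₀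
  rw [Mneg_cons_apply_one, Mneg_cons_apply_one] at h₁
  have hnil : Mneg [] 1 0 = 0 := rfl
  have hmul : (x - d) * Mneg u 0 0 = Mneg u 1 0 :=
    mul_left_cancel₀ hδ (by linear_combination d * h₁ - h₀ - hnil)
  nlinarith

theorem length_le_of_col_zero_eq_smul {ds : List ℤ} (hds : ∀ z ∈ ds, 1 ≤ z) {x δ : ℤ}
    {u : List ℤ} (hu : ∀ z ∈ u, 2 ≤ z) (hδ : δ ≠ 0)
    (h : (Mneg ds).col 0 = δ • (Mneg (x :: u)).col 0) : (x :: u).length ≤ ds.length := by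
  match ds with
  | [] => exact absurd h (col_zero_nil_ne_smul hu hδ)
  | d :: ds' =>
    obtain ⟨-, hds'⟩ := List.forall_mem_cons.mp hds
    rcases lt_or_ge d x with hdx | hxd
    · match ds' with
      | [] => exact absurd h (col_zero_singleton_ne_smul hdx hu hδ)
      | e :: ds'' =>
        obtain ⟨he, hds''⟩ := List.forall_mem_cons.mp hds'
        obtain ⟨w, hw, hlen, hM⟩ := exists_Mneg_cons_cons_one_cons_eq_neg hdx he hu
        have hcol : (Mneg (d :: e :: ds'')).col 0 = -δ • (Mneg (d :: e :: 1 :: w)).col 0 := by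
          rw [h, hM]; ext i; simp
        have := length_le_of_col_zero_eq_smul hds'' hw (neg_ne_zero.mpr hδ)
          (col_zero_eq_smul_of_cons (col_zero_eq_smul_of_cons hcol))
        simp only [List.length_cons] at this ⊢
        omega
    · match u with
      | [] => simp
      | y :: u' =>
        obtain ⟨hy, hu'⟩ := List.forall_mem_cons.mp hu
        rcases hxd.eq_or_lt with rfl | hxd
        · have := length_le_of_col_zero_eq_smul hds' hu' hδ (col_zero_eq_smul_of_cons h)
          exact Nat.succ_le_succ this
        · obtain ⟨w, hw, hlen, hM⟩ :=
            exists_Mneg_cons_one_cons_eq hxd (one_le_two.trans hy) hu'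
          rw [← hM] at h
          have := length_le_of_col_zero_eq_smul hds' hw hδ (col_zero_eq_smul_of_cons h)
          simp only [List.length_cons] at this ⊢
          omega

/-- let `a, b, c, d > 0` with `bc − ad = 1` and `a > b`, and
`A = [[a, −b], [c, −d]]`. If `c₁, …, c_k` are positive integers with
`c_i ≥ 2` for `2 ≤ i ≤ k` such that `K_k(c₁, …, c_k) = a` and
`K_{k−1}(c₂, …, c_k) = c` (i.e. `a/c = ⟦c₁, …, c_k⟧`), then
`A = M(c₁, …, c_k)` and `k` is the smallest length of any presentation
`±A = M(d₁, …, d_m)` with positive integers `d_i`. -/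
theorem stmt19 (a b c d : ℤ) (ha : 0 < a) (hb : 0 < b) (hc : 0 < c)
    (hd : 0 < d) (hdet : b * c - a * d = 1) (hab : a > b)
    (cs : List ℤ) (hne : cs ≠ [])
    (hpos : ∀ x ∈ cs, 1 ≤ x) (htail : ∀ x ∈ cs.tail, 2 ≤ x)
    (hKa : Klist cs = a) (hKc : Klist cs.tail = c) :
    !![a, -b; c, -d] = Mneg cs ∧
    (∀ (δ : ℤ) (ds : List ℤ), (δ = 1 ∨ δ = -1) → (∀ x ∈ ds, 1 ≤ x) →
      δ • (!![a, -b; c, -d] : Matrix (Fin 2) (Fin 2) ℤ) = Mneg ds →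
      cs.length ≤ ds.length) := by
  obtain ⟨x, u, rfl⟩ := List.exists_cons_of_ne_nil hne
  have hcol : (Mneg (x :: u)).col 0 = ![a, c] := by rw [col_zero_Mneg_cons, hKa, ← hKc]; rfl
  have hA : !![a, -b; c, -d] = Mneg (x :: u) := by
    have hdetA : (!![a, -b; c, -d]).det = 1 := by
      rw [Matrix.det_fin_two_of]; linear_combination hdet
    refine eq_of_det_eq_one_of_col_zero_eq hdetA (det_Mneg _) ?_ ?_
    · rw [hcol]; ext i; fin_cases i <;> rfl
    · obtain ⟨hq₀, hq₁⟩ :=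
        neg_Mneg_cons_apply_zero_one_mem_Icc (u := u) (hpos x List.mem_cons_self) htail
      rw [Mneg_apply_zero_zero, hKa] at hq₁
      change |-b - Mneg (x :: u) 0 1| < a
      rw [abs_lt]; constructor <;> linarith
  refine ⟨hA, fun δ ds hδ hds h => ?_⟩
  have hδ₀ : δ ≠ 0 := by rcases hδ with rfl | rfl <;> decide
  exact length_le_of_col_zero_eq_smul hds htail hδ₀ (by rw [← h, hA]; rfl)
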